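/- Let X be a real n × m matrix, Y a real n × q matrix, and λ ≥ 0. Then the infimum over all pairs of real m × q matrices (G, H) of ‖X(G ⊙ H) − Y‖_F² + λ(‖G‖_F² + ‖H‖_F²) equals the infimum over all real m × q matrices W of ‖XW − Y‖_F² + 2λ Σ_{i,j} |W_{ij}|. -/

import Mathlib

open Matrix

/-- Squared Frobenius norm of a real matrix. -/
noncomputable def frobSq {n q : ℕ} (A : Matrix (Fin n) (Fin q) ℝ) : ℝ :=
  ∑ i, ∑ j, (A i j) ^ 2

theorem frobSq_nonneg_aux {n q : ℕ} (A : Matrix (Fin n) (Fin q) ℝ) : 0 ≤ frobSq A :=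
  Finset.sum_nonneg fun _ _ => Finset.sum_nonneg fun _ _ => sq_nonneg _

theorem exists_factor_aux (w : ℝ) : ∃ g h : ℝ, g * h = w ∧ g ^ 2 + h ^ 2 = 2 * |w| := by
  have hs := Real.mul_self_sqrt (abs_nonneg w)
  rcases le_total 0 w with hw | hw
  · refine ⟨√|w|, √|w|, ?_, by nlinarith⟩
    rw [hs, abs_of_nonneg hw]
  · refine ⟨√|w|, -√|w|, ?_, by nlinarith⟩
    rw [mul_neg, hs, abs_of_nonpos hw, neg_neg]

theorem hadamard_ridge_eq_lasso_inf {n m q : ℕ}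
    (X : Matrix (Fin n) (Fin m) ℝ) (Y : Matrix (Fin n) (Fin q) ℝ)
    (lam : ℝ) (hlam : 0 ≤ lam) :
    sInf {c : ℝ | ∃ G H : Matrix (Fin m) (Fin q) ℝ,
        c = frobSq (X * Matrix.hadamard G H - Y) + lam * (frobSq G + frobSq H)}
      =
    sInf {c : ℝ | ∃ W : Matrix (Fin m) (Fin q) ℝ,
        c = frobSq (X * W - Y) + 2 * lam * ∑ i, ∑ j, |W i j|} := by
  have hS : ∀ W : Matrix (Fin m) (Fin q) ℝ, 0 ≤ ∑ i, ∑ j, |W i j| := fun W =>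
    Finset.sum_nonneg fun _ _ => Finset.sum_nonneg fun _ _ => abs_nonneg _
  apply le_antisymm
  · refine le_csInf (Set.nonempty_of_mem (x := _) ⟨0, rfl⟩) ?_
    rintro c ⟨W, rfl⟩
    apply csInf_le
    · refine ⟨0, ?_⟩
      rintro c ⟨G, H, rfl⟩
      have h1 := frobSq_nonneg_aux (X * Matrix.hadamard G H - Y)
      have h2 := frobSq_nonneg_aux G
      have h3 := frobSq_nonneg_aux H
      positivity
    · choose g h hm hq using exists_factor_aux
      refine ⟨Matrix.of fun i j => g (W i j), Matrix.of fun i j => h (W i j), ?_⟩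
      have e1 : Matrix.hadamard (Matrix.of fun i j => g (W i j))
          (Matrix.of fun i j => h (W i j)) = W := by
        ext i j
        simp [Matrix.hadamard, hm]
      have e2 : frobSq (Matrix.of fun i j => g (W i j))
          + frobSq (Matrix.of fun i j => h (W i j)) = 2 * ∑ i, ∑ j, |W i j| := by
        simp only [frobSq, Matrix.of_apply, ← Finset.sum_add_distrib, hq, Finset.mul_sum]
      rw [e1, e2]
      ring
  · refine le_csInf (Set.nonempty_of_mem (x := _) ⟨0, 0, rfl⟩) ?_
    rintro c ⟨G, H, rfl⟩
    refine le_trans (csInf_le ?_ ⟨Matrix.hadamard G H, rfl⟩) ?_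
    · refine ⟨0, ?_⟩
      rintro c ⟨W, rfl⟩
      have h1 := frobSq_nonneg_aux (X * W - Y)
      have h2 := hS W
      positivity
    · have e : 2 * ∑ i, ∑ j, |Matrix.hadamard G H i j| ≤ frobSq G + frobSq H := by
        simp only [frobSq, ← Finset.sum_add_distrib, Finset.mul_sum]
        refine Finset.sum_le_sum fun i _ => Finset.sum_le_sum fun j _ => ?_
        rw [Matrix.hadamard_apply, abs_mul, ← sq_abs (G i j), ← sq_abs (H i j)]
        nlinarith [sq_nonneg (|G i j| - |H i j|)]
      have := mul_le_mul_of_nonneg_left e hlam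
      linarith
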